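/- Let N ≥ 1, T > 0, and let constants L₁, N₁ ≥ 0 and 0 < δ ≤ M₁ be given. Let c : ℝ^N × [0,T] → ℝ be Borel measurable, continuously differentiable in x for almost every t, with |c(x,t) − c(y,t)| ≤ L₁|x − y|, |D_x c(x,t) − D_x c(y,t)| ≤ N₁|x − y| and δ ≤ c(x,t) ≤ M₁ for all x, y ∈ ℝ^N and almost every t ∈ [0,T]. Let K₀ ⊂ ℝ^N be a nonempty closed set and for t ∈ (0,T] let ℛ(t) = { x(t) : x : [0,t] → ℝ^N absolutely continuous, x(0) ∈ K₀, |ẋ(s)| ≤ c(x(s), s) for a.e. s ∈ [0,t] } be the reachable set at time t. Then there exists γ > 0, depending only on T, L₁, N₁, M₁ and δ, such that for every t ∈ (0,T] the set ℛ(t) has the interior ball property of radius γ t. -/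

import Mathlib

open MeasureTheory

/-!
Let `x` be a trajectory on a short interval `[a, b]`, with velocity `v`, and let `C` and `A` be
the speed and its spatial gradient along `x`. We look for a moving ball of centre `x - d` and
radius `r`, starting from the single point `x a`, such that each point of the final ball is
reached from `x a` by an admissible curve. The affine approximation of the speed suggests

  `(d, r)' = (v, C) - (r A, ⟪A, d⟫) - (d, r)`,

where the last term shrinks the ball at unit rate.

The linear part `(d, r) ↦ (r A, ⟪A, d⟫)` is an infinitesimal Lorentz boost, hence skew for
`⟨(e, m), (d, r)⟩ = m r - ⟪e, d⟫`. Vectors `p = (e, m)` transported by `p' = -(m A, ⟪A, e⟫)`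
therefore stay in the forward cone `‖e‖ ≤ m`, and pairing `(d, r)` with them shows `‖d‖ ≤ r`: the
point `x` never leaves its ball. For each point of the final ball, the direction `e / m` of such
a `p` selects the curve `x - d + r e / m` that ends there. This curve is admissible because the
quadratic error `N ‖r e / m - d‖ ^ 2` of the affine approximation is absorbed by the shrinking.
Finally `r' ≥ δ / 2` on a short interval, so taking `[a, b]` to be a fixed final fraction of
`[0, t]` gives a ball of radius proportional to `t`.
-/

section

open Set Filter Metric Topology NNReal

section AbsoluteContinuity

variable {X Y : Type*} [PseudoMetricSpace X] [PseudoMetricSpace Y] {a b : ℝ}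

lemma absolutelyContinuousOnInterval_of_dist_le {f : ℝ → X} {g : ℝ → Y} {C : ℝ}
    (hf : AbsolutelyContinuousOnInterval f a b)
    (hg : ∀ s ∈ uIcc a b, ∀ t ∈ uIcc a b, dist (g s) (g t) ≤ C * dist (f s) (f t)) :
    AbsolutelyContinuousOnInterval g a b := by
  have hlim := Tendsto.const_mul C hf
  rw [mul_zero] at hlim
  refine squeeze_zero' (Eventually.of_forall fun I => Finset.sum_nonneg fun _ _ => dist_nonneg)
    (eventually_inf_principal.2 (Eventually.of_forall fun I hI => ?_)) hlim
  rw [Finset.mul_sum]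
  exact Finset.sum_le_sum fun i hi => hg _ (hI.1 i hi).1 _ (hI.1 i hi).2

lemma absolutelyContinuousOnInterval_inv {f : ℝ → ℝ} {ε : ℝ} (hε : 0 < ε)
    (hf : AbsolutelyContinuousOnInterval f a b) (hfε : ∀ s ∈ uIcc a b, ε ≤ f s) :
    AbsolutelyContinuousOnInterval (fun s => (f s)⁻¹) a b := by
  refine absolutelyContinuousOnInterval_of_dist_le (C := (ε * ε)⁻¹) hf fun s hs t ht => ?_
  have hs₀ := hε.trans_le (hfε s hs)
  have ht₀ := hε.trans_le (hfε t ht)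
  rw [dist_inv_inv₀ hs₀.ne' ht₀.ne', Real.norm_of_nonneg hs₀.le, Real.norm_of_nonneg ht₀.le,
    inv_mul_eq_div]
  gcongr
  exacts [hfε s hs, hfε t ht]

variable {V W : Type*} [NormedAddCommGroup V] [NormedSpace ℝ V]
  [NormedAddCommGroup W] [NormedSpace ℝ W]

lemma exists_lipschitzOnWith_comp_of_contDiff {g : V → W} {u : ℝ → V} {K : ℝ≥0}
    (hg : ContDiff ℝ 1 g) (hu : LipschitzWith K u) {S : Set ℝ} (hS : IsCompact S) :
    ∃ K', LipschitzOnWith K' (fun s => g (u s)) S :=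
  (hg.locallyLipschitz.comp
    hu.locallyLipschitz).locallyLipschitzOn.exists_lipschitzOnWith_of_compact hS

lemma sub_le_integral_of_ae_hasDerivAt_le {f f' g : ℝ → ℝ} (hab : a ≤ b)
    (hf : AbsolutelyContinuousOnInterval f a b)
    (hf' : ∀ᵐ s ∂volume.restrict (Icc a b), HasDerivAt f (f' s) s)
    (hg : IntervalIntegrable g volume a b)
    (hle : ∀ᵐ s ∂volume.restrict (Icc a b), f' s ≤ g s) :
    f b - f a ≤ ∫ s in a..b, g s := by
  rw [← hf.integral_deriv_eq_sub]
  refine intervalIntegral.integral_mono_ae_restrict hab hf.intervalIntegrable_deriv hg ?_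
  filter_upwards [hf', hle] with s hs hs'
  rwa [hs.deriv]

lemma norm_sub_le_integral_of_ae_hasDerivAt {f f' : ℝ → V} {g : ℝ → ℝ} (hab : a ≤ b)
    (hf : AbsolutelyContinuousOnInterval f a b)
    (hf' : ∀ᵐ s ∂volume.restrict (Icc a b), HasDerivAt f (f' s) s)
    (hg : IntervalIntegrable g volume a b)
    (hle : ∀ᵐ s ∂volume.restrict (Icc a b), ‖f' s‖ ≤ g s) :
    ‖f b - f a‖ ≤ ∫ s in a..b, g s := by
  obtain ⟨φ, hφ, hφfab⟩ := exists_dual_vector'' ℝ (f b - f a)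
  have hφle (v : V) : |φ v| ≤ ‖v‖ := by simpa using φ.le_of_opNorm_le hφ v
  have hφf : AbsolutelyContinuousOnInterval (fun s => φ (f s)) a b :=
    absolutelyContinuousOnInterval_of_dist_le (C := 1) hf fun s _ t _ => by
      rw [one_mul, dist_eq_norm, dist_eq_norm, ← map_sub]
      exact hφle _
  calc ‖f b - f a‖ = φ (f b) - φ (f a) := by rw [← map_sub, hφfab, RCLike.ofReal_real_eq_id, id]
    _ ≤ ∫ s in a..b, g s := by
      refine sub_le_integral_of_ae_hasDerivAt_le hab hφf
        (hf'.mono fun s hs => φ.hasFDerivAt.comp_hasDerivAt s hs) hg ?_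
      filter_upwards [hle] with s hs
      exact (le_abs_self _).trans ((hφle _).trans hs)

lemma norm_integral_indicator_Icc_le {g : ℝ → V} {C : ℝ} (hab : a ≤ b) (hC : 0 ≤ C)
    (hg : ∀ᵐ s ∂volume.restrict (Icc a b), ‖g s‖ ≤ C) (s₀ s : ℝ) :
    ‖∫ τ in s₀..s, (Icc a b).indicator g τ‖ ≤ C * (b - a) := by
  rw [intervalIntegral.norm_intervalIntegral_eq, setIntegral_indicator measurableSet_Icc]
  have hfin : volume (uIoc s₀ s ∩ Icc a b) < ⊤ :=
    measure_inter_lt_top_of_right_ne_top measure_Icc_lt_top.ne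
  refine (norm_setIntegral_le_of_norm_le_const_ae hfin
    (ae_restrict_of_ae_restrict_of_subset inter_subset_right hg)).trans ?_
  gcongr
  calc volume.real (uIoc s₀ s ∩ Icc a b) ≤ volume.real (Icc a b) :=
        measureReal_mono inter_subset_right measure_Icc_lt_top.ne
    _ = b - a := Real.volume_real_Icc_of_le hab

lemma nonneg_of_ae_hasDerivAt_ge_neg_mul {f f' : ℝ → ℝ} {κ : ℝ} (hab : a ≤ b)
    (hf : AbsolutelyContinuousOnInterval f a b)
    (hf' : ∀ᵐ s ∂volume.restrict (Icc a b), HasDerivAt f (f' s) s)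
    (hle : ∀ᵐ s ∂volume.restrict (Icc a b), -(κ * f s) ≤ f' s) (ha : 0 ≤ f a) :
    0 ≤ f b := by
  have hexp : AbsolutelyContinuousOnInterval (fun s => Real.exp (κ * s)) a b :=
    ContDiffOn.absolutelyContinuousOnInterval (by fun_prop)
  have hderiv : ∀ᵐ s ∂volume.restrict (Icc a b), HasDerivAt (-fun s => Real.exp (κ * s) * f s)
      (-(Real.exp (κ * s) * κ * f s + Real.exp (κ * s) * f' s)) s := by
    filter_upwards [hf'] with s hs
    exact ((by simpa using ((hasDerivAt_id s).const_mul κ).exp :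
      HasDerivAt (fun s => Real.exp (κ * s)) _ s).mul hs).neg
  have hmono := sub_le_integral_of_ae_hasDerivAt_le hab (hexp.mul hf).neg hderiv
    (intervalIntegrable_const (c := 0)) (by
      filter_upwards [hle] with s hs
      nlinarith [Real.exp_pos (κ * s)])
  have hprod : Real.exp (κ * a) * f a ≤ Real.exp (κ * b) * f b := by
    simpa using hmono
  exact nonneg_of_mul_nonneg_right ((mul_nonneg (Real.exp_pos _).le ha).trans hprod)
    (Real.exp_pos _)

lemma ae_hasDerivAt_deriv_of_norm_sub_le_integral [FiniteDimensional ℝ V] {f : ℝ → V} {g : ℝ → ℝ}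
    {K : ℝ≥0} (hab : a ≤ b) (hf : LipschitzOnWith K f (Icc a b))
    (hg : IntervalIntegrable g volume a b)
    (hfg : ∀ s t, a ≤ s → s ≤ t → t ≤ b → ‖f t - f s‖ ≤ ∫ τ in s..t, g τ) :
    ∀ᵐ s ∂volume.restrict (Icc a b), HasDerivAt f (deriv f s) s ∧ ‖deriv f s‖ ≤ g s := by
  rw [← restrict_Ioo_eq_restrict_Icc]
  filter_upwards [ae_restrict_mem measurableSet_Ioo,
    ae_restrict_of_ae hf.ae_differentiableWithinAt_of_mem_real,
    ae_restrict_of_ae hg.ae_hasDerivAt_integral] with s hs hdiff hint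
  have hs' : s ∈ Icc a b := Ioo_subset_Icc_self hs
  have hderiv := ((hdiff hs').differentiableAt (Icc_mem_nhds hs.1 hs.2)).hasDerivAt
  rw [uIcc_of_le hab] at hint
  have hslope := hint hs' a (left_mem_Icc.2 hab)
  have hright : Ioi s ⊆ {s}ᶜ := fun t ht => ne_of_gt ht
  refine ⟨hderiv, le_of_tendsto_of_tendsto
    (hderiv.tendsto_slope.mono_left (nhdsWithin_mono s hright)).norm
    (hslope.tendsto_slope.mono_left (nhdsWithin_mono s hright)) ?_⟩
  filter_upwards [Ioo_mem_nhdsGT hs.2] with t ht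
  have hpos : 0 < t - s := sub_pos.2 ht.1
  have hsub {τ : ℝ} (hτ : τ ∈ Icc a b) : IntervalIntegrable g volume a τ :=
    hg.mono_set (by rw [uIcc_of_le hab, uIcc_of_le hτ.1]; exact Icc_subset_Icc_right hτ.2)
  rw [slope_def_module, slope_def_field, norm_smul, norm_inv, Real.norm_of_nonneg hpos.le,
    inv_mul_eq_div, intervalIntegral.integral_interval_sub_left
      (hsub ⟨hs.1.le.trans ht.1.le, ht.2.le⟩) (hsub hs')]
  gcongr
  exact hfg s t hs.1.le ht.1.le ht.2.le

end AbsoluteContinuity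

section Caratheodory

open scoped BoundedContinuousFunction

variable {H : Type*} [NormedAddCommGroup H] {F : ℝ → H → H} {a b : ℝ} {K B : ℝ≥0}

/-- A time-dependent vector field on `[a, b]` to which Picard iteration applies although it is only
measurable in time: for almost every time it is `K`-Lipschitz in space and bounded by `B` at the
origin. -/
structure IsCaratheodory (F : ℝ → H → H) (a b : ℝ) (K B : ℝ≥0) : Prop where
  lipschitzWith : ∀ᵐ s ∂volume.restrict (Icc a b), LipschitzWith K (F s)
  norm_zero_le : ∀ᵐ s ∂volume.restrict (Icc a b), ‖F s 0‖ ≤ B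
  aestronglyMeasurable : ∀ u : ℝ → H, Continuous u →
    AEStronglyMeasurable (fun s => F s (u s)) (volume.restrict (Icc a b))

namespace IsCaratheodory

lemma ae_norm_le (hF : IsCaratheodory F a b K B) (u : ℝ →ᵇ H) :
    ∀ᵐ s ∂volume.restrict (Icc a b), ‖F s (u s)‖ ≤ B + K * ‖u‖ := by
  filter_upwards [hF.lipschitzWith, hF.norm_zero_le] with s hlip hzero
  calc ‖F s (u s)‖ ≤ ‖F s 0‖ + ‖F s (u s) - F s 0‖ := norm_le_norm_add_norm_sub' _ _
    _ ≤ B + K * ‖u s - 0‖ := add_le_add hzero (hlip.norm_sub_le _ _)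
    _ ≤ B + K * ‖u‖ := by
      rw [sub_zero]
      gcongr
      exact u.norm_coe_le_norm s

lemma integrable_indicator (hF : IsCaratheodory F a b K B) (u : ℝ →ᵇ H) :
    Integrable ((Icc a b).indicator fun s => F s (u s)) := by
  rw [integrable_indicator_iff measurableSet_Icc]
  exact (integrable_const (B + K * ‖u‖ : ℝ)).mono' (hF.aestronglyMeasurable u u.continuous)
    (hF.ae_norm_le u)

variable [NormedSpace ℝ H]

/-- The Picard operator `u ↦ u₀ + ∫_{s₀} F(τ, u(τ)) dτ`, with `F` set to zero outside `[a, b]` so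
that it acts on the complete space of bounded continuous curves on the whole line. -/
noncomputable def picard (hF : IsCaratheodory F a b K B) (hab : a ≤ b) (s₀ : ℝ) (u₀ : H)
    (u : ℝ →ᵇ H) : ℝ →ᵇ H :=
  .ofNormedAddCommGroup
    (fun s => u₀ + ∫ τ in s₀..s, (Icc a b).indicator (fun τ => F τ (u τ)) τ)
    (continuous_const.add ((hF.integrable_indicator u).continuous_primitive s₀))
    (‖u₀‖ + (B + K * ‖u‖) * (b - a))
    (fun s => (norm_add_le _ _).trans (by
      gcongr
      exact norm_integral_indicator_Icc_le hab (by positivity) (hF.ae_norm_le u) s₀ s))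

lemma norm_picard_le (hF : IsCaratheodory F a b K B) (hab : a ≤ b) (s₀ : ℝ) (u₀ : H)
    (u : ℝ →ᵇ H) : ‖hF.picard hab s₀ u₀ u‖ ≤ ‖u₀‖ + (B + K * ‖u‖) * (b - a) :=
  BoundedContinuousFunction.norm_ofNormedAddCommGroup_le _
    (add_nonneg (norm_nonneg _) (mul_nonneg (by positivity) (sub_nonneg.2 hab))) _

lemma dist_picard_le (hF : IsCaratheodory F a b K B) (hab : a ≤ b) (s₀ : ℝ) (u₀ : H)
    (u v : ℝ →ᵇ H) :
    dist (hF.picard hab s₀ u₀ u) (hF.picard hab s₀ u₀ v) ≤ K * (b - a) * dist u v := by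
  have hlip : ∀ᵐ s ∂volume.restrict (Icc a b), ‖F s (u s) - F s (v s)‖ ≤ K * dist u v := by
    filter_upwards [hF.lipschitzWith] with s hs
    rw [← dist_eq_norm]
    exact (hs.dist_le_mul _ _).trans
      (mul_le_mul_of_nonneg_left (BoundedContinuousFunction.dist_coe_le_dist s) K.2)
  refine (BoundedContinuousFunction.dist_le
    (mul_nonneg (mul_nonneg K.2 (sub_nonneg.2 hab)) dist_nonneg)).2 fun s => ?_
  calc dist (hF.picard hab s₀ u₀ u s) (hF.picard hab s₀ u₀ v s)
      = ‖∫ τ in s₀..s, (Icc a b).indicator (fun τ => F τ (u τ) - F τ (v τ)) τ‖ := by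
        rw [dist_eq_norm, ← Pi.sub_def, indicator_sub', Pi.sub_def, intervalIntegral.integral_sub
          (hF.integrable_indicator u).intervalIntegrable
          (hF.integrable_indicator v).intervalIntegrable]
        exact congrArg norm (add_sub_add_left_eq_sub _ _ _)
    _ ≤ K * dist u v * (b - a) :=
        norm_integral_indicator_Icc_le hab (by positivity) hlip s₀ s
    _ = K * (b - a) * dist u v := by ring

theorem exists_picard_fixedPoint [CompleteSpace H] (hF : IsCaratheodory F a b K B) (hab : a ≤ b)
    (hK : K * (b - a) ≤ 1 / 2) (s₀ : ℝ) (u₀ : H) :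
    ∃ u, hF.picard hab s₀ u₀ u = u ∧ B + K * ‖u‖ ≤ 2 * (B + K * ‖u₀‖) := by
  have hcontr : ContractingWith (1 / 2) (hF.picard hab s₀ u₀) :=
    ⟨half_lt_self one_pos, LipschitzWith.of_dist_le_mul fun u v =>
      (hF.dist_picard_le hab s₀ u₀ u v).trans (by push_cast; gcongr)⟩
  obtain ⟨u, hu⟩ : ∃ u, hF.picard hab s₀ u₀ u = u := ⟨_, hcontr.fixedPoint_isFixedPt⟩
  have hnorm : ‖u‖ ≤ ‖u₀‖ + (B + K * ‖u‖) * (b - a) := by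
    simpa only [hu] using hF.norm_picard_le hab s₀ u₀ u
  have hhalf : K * (b - a) * (B + K * ‖u‖) ≤ 1 / 2 * (B + K * ‖u‖) := by gcongr
  exact ⟨u, hu, by linarith [mul_le_mul_of_nonneg_left hnorm K.coe_nonneg]⟩

theorem exists_lipschitz_solution [CompleteSpace H] (hF : IsCaratheodory F a b K B) (hab : a ≤ b)
    (hK : K * (b - a) ≤ 1 / 2) (s₀ : ℝ) (u₀ : H) :
    ∃ u : ℝ → H, LipschitzWith (2 * (B + K * ‖u₀‖₊)) u ∧ u s₀ = u₀ ∧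
      ∀ᵐ s ∂volume.restrict (Icc a b), HasDerivAt u (F s (u s)) s := by
  obtain ⟨u, hu, hbound⟩ := hF.exists_picard_fixedPoint hab hK s₀ u₀
  have hint := hF.integrable_indicator u
  have hu_apply (s : ℝ) : u s = u₀ + ∫ τ in s₀..s, (Icc a b).indicator (fun τ => F τ (u τ)) τ :=
    (DFunLike.congr_fun hu s).symm
  refine ⟨u, LipschitzWith.of_dist_le_mul fun s t => ?_, by simp [hu_apply s₀], ?_⟩
  · have hae : ∀ᵐ τ, τ ∈ uIoc t s →
        ‖(Icc a b).indicator (fun τ => F τ (u τ)) τ‖ ≤ 2 * (B + K * ‖u₀‖) := by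
      filter_upwards [(ae_restrict_iff' measurableSet_Icc).1 (hF.ae_norm_le u)] with τ hτ _
      rw [norm_indicator_eq_indicator_norm]
      exact indicator_apply_le' (fun hmem => (hτ hmem).trans hbound) (fun _ => by positivity)
    rw [dist_eq_norm, hu_apply s, hu_apply t, add_sub_add_left_eq_sub,
      intervalIntegral.integral_interval_sub_left hint.intervalIntegrable hint.intervalIntegrable]
    exact intervalIntegral.norm_integral_le_of_norm_le_const_ae hae
  · filter_upwards [ae_restrict_of_ae
        (LocallyIntegrable.ae_hasDerivAt_integral hint.locallyIntegrable),
      ae_restrict_mem measurableSet_Icc] with s hs hmem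
    rw [indicator_of_mem hmem] at hs
    exact ((hs s₀).const_add u₀).congr_of_eventuallyEq (Eventually.of_forall hu_apply)

end IsCaratheodory

end Caratheodory

section ProductDerivative

variable {V W : Type*} [NormedAddCommGroup V] [NormedSpace ℝ V]
  [NormedAddCommGroup W] [NormedSpace ℝ W] {u : ℝ → V × W} {u' : V × W} {s : ℝ}

lemma hasDerivAt_fst (hu : HasDerivAt u u' s) : HasDerivAt (fun s => (u s).1) u'.1 s :=
  (ContinuousLinearMap.fst ℝ V W).hasFDerivAt.comp_hasDerivAt s hu

lemma hasDerivAt_snd (hu : HasDerivAt u u' s) : HasDerivAt (fun s => (u s).2) u'.2 s :=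
  (ContinuousLinearMap.snd ℝ V W).hasFDerivAt.comp_hasDerivAt s hu

end ProductDerivative

section LorentzBoost

open scoped RealInnerProductSpace

variable {E : Type*} [NormedAddCommGroup E] [InnerProductSpace ℝ E]

/-- The Lorentz form on space-time `E × ℝ`, positive on the time axis. The forward cone
`‖u.1‖ ≤ u.2` parametrises the closed balls around a point through displacement and radius. -/
def lorentzForm (u w : E × ℝ) : ℝ := u.2 * w.2 - ⟪u.1, w.1⟫

/-- The infinitesimal Lorentz boost in the direction `A`. -/
noncomputable def boost (A : E) : E × ℝ →L[ℝ] E × ℝ :=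
  ((ContinuousLinearMap.snd ℝ E ℝ).smulRight A).prod
    ((innerSL ℝ A).comp (ContinuousLinearMap.fst ℝ E ℝ))

@[simp]
lemma boost_apply (A : E) (u : E × ℝ) : boost A u = (u.2 • A, ⟪A, u.1⟫) := rfl

lemma norm_boost_apply_le (A : E) (u : E × ℝ) : ‖boost A u‖ ≤ ‖A‖ * ‖u‖ := by
  rw [boost_apply, Prod.norm_mk]
  refine max_le ?_ ((norm_inner_le_norm _ _).trans ?_)
  · rw [norm_smul, mul_comm]
    gcongr
    exact norm_snd_le u
  · gcongr
    exact norm_fst_le u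

-- The boost is skew for the Lorentz form, so its two contributions cancel.
lemma lorentzForm_neg_boost_add (A : E) (κ : ℝ) (p w f : E × ℝ) :
    lorentzForm (-boost A p) w + lorentzForm p (f - boost A w - κ • w) =
      lorentzForm p f - κ * lorentzForm p w := by
  simp only [lorentzForm, boost_apply, Prod.fst_neg, Prod.snd_neg, Prod.fst_sub, Prod.snd_sub,
    Prod.smul_fst, Prod.smul_snd, inner_neg_left, inner_sub_right, real_inner_smul_left,
    real_inner_smul_right, smul_eq_mul, real_inner_comm A]
  ring

lemma lorentzForm_nonneg_of_norm_le {u w : E × ℝ} (hu : ‖u.1‖ ≤ u.2) (hw : ‖w.1‖ ≤ w.2) :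
    0 ≤ lorentzForm u w :=
  sub_nonneg.2 <| (real_inner_le_norm _ _).trans
    (mul_le_mul hu hw (norm_nonneg _) ((norm_nonneg _).trans hu))

lemma hasDerivAt_lorentzForm {p w : ℝ → E × ℝ} {p' w' : E × ℝ} {s : ℝ} (hp : HasDerivAt p p' s)
    (hw : HasDerivAt w w' s) :
    HasDerivAt (fun s => lorentzForm (p s) (w s))
      (lorentzForm p' (w s) + lorentzForm (p s) w') s :=
  (((hasDerivAt_snd hp).mul (hasDerivAt_snd hw)).sub
    ((hasDerivAt_fst hp).inner ℝ (hasDerivAt_fst hw))).congr_deriv (by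
      simp only [lorentzForm]
      ring)

lemma absolutelyContinuousOnInterval_lorentzForm {p w : ℝ → E × ℝ} {K K' : ℝ≥0} {a b : ℝ}
    (hp : LipschitzWith K p) (hw : LipschitzWith K' w) :
    AbsolutelyContinuousOnInterval (fun s => lorentzForm (p s) (w s)) a b := by
  have hsmooth : ContDiff ℝ 1 fun q : (E × ℝ) × (E × ℝ) => lorentzForm q.1 q.2 := by
    unfold lorentzForm
    exact ContDiff.sub (by fun_prop) (ContDiff.inner ℝ (by fun_prop) (by fun_prop))
  obtain ⟨K'', hK''⟩ := exists_lipschitzOnWith_comp_of_contDiff hsmooth (hp.prodMk hw)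
    (isCompact_uIcc (a := a) (b := b))
  exact hK''.absolutelyContinuousOnInterval

end LorentzBoost

section SpeedJet

open scoped RealInnerProductSpace

variable {E : Type*} [NormedAddCommGroup E] [InnerProductSpace ℝ E] {f : ℝ → E × ℝ} {A : ℝ → E}
  {a b δ : ℝ} {L M κ B : ℝ≥0}

lemma isCaratheodory_boost (hf : AEStronglyMeasurable f (volume.restrict (Icc a b)))
    (hA : AEStronglyMeasurable A (volume.restrict (Icc a b)))
    (hfB : ∀ᵐ s ∂volume.restrict (Icc a b), ‖f s‖ ≤ B)
    (hAL : ∀ᵐ s ∂volume.restrict (Icc a b), ‖A s‖ ≤ L) :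
    IsCaratheodory (fun s u => f s - boost (A s) u - (κ : ℝ) • u) a b (L + κ) B where
  lipschitzWith := hAL.mono fun s hs => LipschitzWith.of_dist_le_mul fun u w => by
    rw [dist_eq_norm, dist_eq_norm,
      show f s - boost (A s) u - (κ : ℝ) • u - (f s - boost (A s) w - (κ : ℝ) • w) =
        -(boost (A s) (u - w) + (κ : ℝ) • (u - w)) by rw [map_sub, smul_sub]; abel, norm_neg]
    calc ‖boost (A s) (u - w) + (κ : ℝ) • (u - w)‖
        ≤ ‖A s‖ * ‖u - w‖ + κ * ‖u - w‖ := (norm_add_le _ _).trans <|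
          add_le_add (norm_boost_apply_le _ _) (norm_smul_of_nonneg κ.2 _).le
      _ ≤ ↑(L + κ) * ‖u - w‖ := by
        rw [NNReal.coe_add, add_mul]
        gcongr
  norm_zero_le := hfB.mono fun s hs => by simpa only [map_zero, smul_zero, sub_zero] using hs
  aestronglyMeasurable := fun u hu => by
    have hu' := hu.aestronglyMeasurable (μ := volume.restrict (Icc a b))
    exact (hf.sub ((hu'.snd.smul hA).prodMk (hA.inner hu'.fst))).sub (hu'.const_smul (κ : ℝ))

/-- A curve in space-time transported by the boosts along `A`. -/
structure IsBoostTransported (A : ℝ → E) (a b : ℝ) (p : ℝ → E × ℝ) : Prop where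
  lipschitz : ∃ K, LipschitzWith K p
  hasDerivAt : ∀ᵐ s ∂volume.restrict (Icc a b), HasDerivAt p (-boost (A s) (p s)) s

lemma IsBoostTransported.lorentzForm_self_eq {p : ℝ → E × ℝ} (hp : IsBoostTransported A a b p)
    {s t : ℝ} (hs : s ∈ Icc a b) (ht : t ∈ Icc a b) :
    lorentzForm (p s) (p s) = lorentzForm (p t) (p t) := by
  obtain ⟨K, hK⟩ := hp.lipschitz
  have hab := hs.1.trans hs.2
  obtain ⟨C, hC⟩ := (absolutelyContinuousOnInterval_lorentzForm (a := a) (b := b)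
    hK hK).const_of_ae_hasDerivAt_zero (by
      rw [uIcc_of_le hab, ← ae_restrict_iff' measurableSet_Icc]
      filter_upwards [hp.hasDerivAt] with s hs
      refine (hasDerivAt_lorentzForm hs hs).congr_deriv ?_
      simpa [lorentzForm] using lorentzForm_neg_boost_add (A s) 0 (p s) (p s) 0)
  rw [uIcc_of_le hab] at hC
  rw [hC s hs, hC t ht]

lemma exists_isBoostTransported [CompleteSpace E]
    (hA : AEStronglyMeasurable A (volume.restrict (Icc a b)))
    (hAL : ∀ᵐ s ∂volume.restrict (Icc a b), ‖A s‖ ≤ L) (hL : 4 * L * (b - a) ≤ 1) {t : ℝ}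
    (ht : t ∈ Icc a b) {e : E} (he : ‖e‖ ≤ 1) :
    ∃ p, IsBoostTransported A a b p ∧ p t = (e, 1) ∧
      ∀ s ∈ Icc a b, 1 / 2 ≤ (p s).2 ∧ ‖(p s).1‖ ≤ (p s).2 := by
  have hcar := isCaratheodory_boost (f := fun _ => (0 : E × ℝ)) (κ := 0) (B := 0)
    aestronglyMeasurable_const hA (by simp) hAL
  obtain ⟨p, hlip, hpt, hderiv⟩ := hcar.exists_lipschitz_solution (ht.1.trans ht.2)
    (by simp only [add_zero]; linarith) t (e, 1)
  have hp : IsBoostTransported A a b p := ⟨⟨_, hlip⟩, by simpa using hderiv⟩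
  refine ⟨p, hp, hpt, fun s hs => ?_⟩
  have htime : 1 / 2 ≤ (p s).2 := by
    have hdist : ‖p s - p t‖ ≤ 2 * L * (b - a) := by
      refine (hlip.norm_sub_le s t).trans ?_
      have hst : ‖s - t‖ ≤ b - a := abs_sub_le_of_le_of_le hs.1 hs.2 ht.1 ht.2
      have he1 : ‖((e, 1) : E × ℝ)‖ = 1 := by simp [Prod.norm_mk, he]
      simp only [NNReal.coe_mul, coe_nnnorm, he1, zero_add, add_zero, mul_one, NNReal.coe_ofNat]
      gcongr
    have hsnd := (norm_snd_le _).trans hdist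
    rw [hpt, Prod.snd_sub, Real.norm_eq_abs] at hsnd
    linarith [neg_abs_le ((p s).2 - 1)]
  refine ⟨htime, abs_le_of_sq_le_sq' ?_ (by linarith) |>.2⟩
  have hconst := hp.lorentzForm_self_eq hs ht
  simp only [hpt, lorentzForm, real_inner_self_eq_norm_sq] at hconst
  nlinarith [norm_nonneg e]

/-- Along a trajectory with velocity and speed `f` and spatial gradient of the speed `A`, the
displacement from the centre and the radius `w = (d, r)` of a ball that is shrunk at unit rate
and otherwise follows the linearised speed. -/
structure IsMovingBall (f : ℝ → E × ℝ) (A : ℝ → E) (a b : ℝ) (w : ℝ → E × ℝ) : Prop where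
  lipschitz : ∃ K, LipschitzWith K w
  eq_zero : w a = 0
  hasDerivAt : ∀ᵐ s ∂volume.restrict (Icc a b), HasDerivAt w (f s - boost (A s) (w s) - w s) s

lemma IsBoostTransported.lorentzForm_nonneg {p w : ℝ → E × ℝ} (hp : IsBoostTransported A a b p)
    (hw : IsMovingBall f A a b w) (hf : ∀ᵐ s ∂volume.restrict (Icc a b), ‖(f s).1‖ ≤ (f s).2)
    (hpcone : ∀ s ∈ Icc a b, ‖(p s).1‖ ≤ (p s).2) {s : ℝ} (hs : s ∈ Icc a b) :
    0 ≤ lorentzForm (p s) (w s) := by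
  obtain ⟨K, hK⟩ := hp.lipschitz
  obtain ⟨K', hK'⟩ := hw.lipschitz
  have hsub : Icc a s ⊆ Icc a b := Icc_subset_Icc_right hs.2
  refine nonneg_of_ae_hasDerivAt_ge_neg_mul (κ := 1) (f := fun s => lorentzForm (p s) (w s)) hs.1
    (absolutelyContinuousOnInterval_lorentzForm hK hK')
    (f' := fun s => lorentzForm (p s) (f s) - 1 * lorentzForm (p s) (w s)) ?_ ?_
    (by simp [hw.eq_zero, lorentzForm])
  · refine ae_restrict_of_ae_restrict_of_subset hsub ?_
    filter_upwards [hp.hasDerivAt, hw.hasDerivAt] with s hps hws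
    exact (hasDerivAt_lorentzForm hps hws).congr_deriv (by
      simpa using lorentzForm_neg_boost_add (A s) 1 (p s) (w s) (f s))
  · filter_upwards [ae_restrict_of_ae_restrict_of_subset hsub hf,
      ae_restrict_mem measurableSet_Icc] with s hfs hmem
    linarith [lorentzForm_nonneg_of_norm_le (hpcone s (hsub hmem)) hfs]

lemma norm_le_of_forall_inner_le {d : E} {r : ℝ} (h : ∀ e : E, ‖e‖ ≤ 1 → ⟪e, d⟫ ≤ r) :
    ‖d‖ ≤ r := by
  have hunit : ‖‖d‖⁻¹ • d‖ ≤ 1 := by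
    rw [norm_smul, norm_inv, norm_norm]
    exact inv_mul_le_one
  calc ‖d‖ = ⟪‖d‖⁻¹ • d, d⟫ := by
        rw [real_inner_smul_left, real_inner_self_eq_norm_mul_norm, ← mul_assoc, inv_mul_mul_self]
    _ ≤ r := h _ hunit

/-- The first-order data of a speed function along a trajectory: `f` is the pair of velocity and
speed, `A` the spatial gradient of the speed. -/
structure IsSpeedJet (f : ℝ → E × ℝ) (A : ℝ → E) (a b δ : ℝ) (L M : ℝ≥0) : Prop where
  aestronglyMeasurable : AEStronglyMeasurable f (volume.restrict (Icc a b))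
  aestronglyMeasurable_gradient : AEStronglyMeasurable A (volume.restrict (Icc a b))
  norm_gradient_le : ∀ᵐ s ∂volume.restrict (Icc a b), ‖A s‖ ≤ L
  norm_velocity_le : ∀ᵐ s ∂volume.restrict (Icc a b), ‖(f s).1‖ ≤ (f s).2
  le_speed : ∀ᵐ s ∂volume.restrict (Icc a b), δ ≤ (f s).2
  speed_le : ∀ᵐ s ∂volume.restrict (Icc a b), (f s).2 ≤ M

namespace IsSpeedJet

lemma le_radius (hf : IsSpeedJet f A a b δ L M) {w : ℝ → E × ℝ} (hw : IsMovingBall f A a b w)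
    (hwM : ∀ s ∈ Icc a b, ‖w s‖ ≤ 2 * M * (b - a)) (hδ : 4 * M * (L + 1) * (b - a) ≤ δ)
    (hab : a ≤ b) : δ / 2 * (b - a) ≤ (w b).2 := by
  obtain ⟨K, hK⟩ := hw.lipschitz
  have hneg : -(w b).2 - -(w a).2 ≤ ∫ _ in a..b, -(δ / 2) := by
    refine sub_le_integral_of_ae_hasDerivAt_le hab
      (LipschitzWith.prod_snd.comp hK).lipschitzOnWith.absolutelyContinuousOnInterval.neg
      (hw.hasDerivAt.mono fun s hs => (hasDerivAt_snd hs).neg) intervalIntegrable_const ?_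
    filter_upwards [hf.le_speed, hf.norm_gradient_le, ae_restrict_mem measurableSet_Icc]
      with s hspeed hAs hmem
    have hboost := (norm_snd_le _).trans (norm_boost_apply_le (A s) (w s))
    have hsnd := norm_snd_le (w s)
    have hgrowth : ‖A s‖ * ‖w s‖ ≤ L * (2 * M * (b - a)) :=
      mul_le_mul hAs (hwM s hmem) (norm_nonneg _) L.2
    rw [Real.norm_eq_abs] at hboost hsnd
    simp only [Prod.snd_sub]
    linarith [le_abs_self (boost (A s) (w s)).2, le_abs_self (w s).2, hwM s hmem]
  rw [hw.eq_zero, Prod.snd_zero, intervalIntegral.integral_const, smul_eq_mul] at hneg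
  linarith

variable [CompleteSpace E]

lemma exists_isMovingBall (hf : IsSpeedJet f A a b δ L M) (hab : a ≤ b)
    (hL : (L + 1) * (b - a) ≤ 1 / 2) :
    ∃ w, IsMovingBall f A a b w ∧ ∀ s ∈ Icc a b, ‖w s‖ ≤ 2 * M * (b - a) := by
  have hfM : ∀ᵐ s ∂volume.restrict (Icc a b), ‖f s‖ ≤ M := by
    filter_upwards [hf.norm_velocity_le, hf.speed_le] with s hv hM
    have hnonneg := (norm_nonneg _).trans hv
    exact max_le (hv.trans hM) (by rwa [Real.norm_of_nonneg hnonneg])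
  have hcar := isCaratheodory_boost (κ := 1) hf.aestronglyMeasurable
    hf.aestronglyMeasurable_gradient hfM hf.norm_gradient_le
  obtain ⟨w, hlip, hwa, hderiv⟩ := hcar.exists_lipschitz_solution hab hL a 0
  simp only [nnnorm_zero, mul_zero, add_zero] at hlip
  refine ⟨w, ⟨⟨_, hlip⟩, hwa, by simpa using hderiv⟩, fun s hs => ?_⟩
  have hdist := hlip.norm_sub_le s a
  rw [hwa, sub_zero, Real.norm_of_nonneg (sub_nonneg.2 hs.1)] at hdist
  exact hdist.trans (by push_cast; gcongr; exact hs.2)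

lemma norm_displacement_le_radius (hf : IsSpeedJet f A a b δ L M) (hL : 4 * L * (b - a) ≤ 1)
    {w : ℝ → E × ℝ} (hw : IsMovingBall f A a b w) {s : ℝ} (hs : s ∈ Icc a b) :
    ‖(w s).1‖ ≤ (w s).2 := by
  refine norm_le_of_forall_inner_le fun e he => ?_
  obtain ⟨p, hp, hps, hcone⟩ := exists_isBoostTransported hf.aestronglyMeasurable_gradient
    hf.norm_gradient_le hL hs he
  have hdual := hp.lorentzForm_nonneg hw hf.norm_velocity_le (fun s hs => (hcone s hs).2) hs
  simpa [hps, lorentzForm] using hdual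

end IsSpeedJet

end SpeedJet

section RegularSpeed

open scoped RealInnerProductSpace

variable {E : Type*} [NormedAddCommGroup E] [InnerProductSpace ℝ E] {δ : ℝ} {L N M : ℝ≥0}

-- The gap `r - ⟪d, e⟫`, by which the triangle inequality for `d + σ • e` fails to be sharp, also
-- controls `‖r • e - d‖ ^ 2`.
lemma norm_add_smul_add_mul_sq_le {d e : E} {r σ κ : ℝ} (hκ : 0 ≤ κ) (hd : ‖d‖ ≤ r)
    (he : ‖e‖ ≤ 1) (hrσ : r ≤ σ) (hr : 4 * κ * r ≤ 1) :
    ‖d + σ • e‖ + κ * ‖r • e - d‖ ^ 2 ≤ σ + r := by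
  have hr₀ : 0 ≤ r := (norm_nonneg d).trans hd
  have hσ₀ : 0 ≤ σ := hr₀.trans hrσ
  have hd_sq : ‖d‖ ^ 2 ≤ r ^ 2 := by gcongr
  have he_sq : ‖e‖ ^ 2 ≤ 1 := pow_le_one₀ (norm_nonneg e) he
  have hinner : |⟪d, e⟫| ≤ r := (abs_real_inner_le_norm d e).trans <| by
    simpa using mul_le_mul hd he (norm_nonneg e) hr₀
  obtain ⟨q, hq⟩ : ∃ q, q = r - ⟪d, e⟫ := ⟨_, rfl⟩
  have hq₀ : 0 ≤ q := by linarith [le_abs_self ⟪d, e⟫]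
  have hq_le : q ≤ 2 * r := by linarith [neg_abs_le ⟪d, e⟫]
  have hgap : ‖r • e - d‖ ^ 2 ≤ 2 * r * q := by
    rw [norm_sub_sq_real, norm_smul, real_inner_smul_left, real_inner_comm, mul_pow,
      Real.norm_eq_abs, sq_abs]
    linarith [mul_le_mul_of_nonneg_left he_sq (sq_nonneg r), congrArg (r * ·) hq]
  have hsum : ‖d + σ • e‖ ^ 2 ≤ (σ + r) ^ 2 - 2 * σ * q := by
    rw [norm_add_sq_real, norm_smul, real_inner_smul_right, mul_pow, Real.norm_eq_abs, sq_abs]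
    linarith [mul_le_mul_of_nonneg_left he_sq (sq_nonneg σ), congrArg (σ * ·) hq]
  have hκq : 2 * κ * r * q ≤ r := by
    linarith [mul_le_mul_of_nonneg_left hq_le (by positivity : 0 ≤ 2 * κ * r),
      mul_le_mul_of_nonneg_right hr hr₀]
  have hκgap : κ * ‖r • e - d‖ ^ 2 ≤ 2 * κ * r * q := by
    linarith [mul_le_mul_of_nonneg_left hgap hκ]
  have hroot : ‖d + σ • e‖ ≤ σ + r - 2 * κ * r * q := by
    refine abs_le_of_sq_le_sq' (hsum.trans ?_) (by linarith) |>.2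
    have hcross : 2 * (2 * κ * r * q) * (σ + r) ≤ 2 * σ * q := by
      calc 2 * (2 * κ * r * q) * (σ + r) ≤ 2 * (2 * κ * r * q) * (σ + σ) := by gcongr
        _ = 4 * κ * r * (2 * σ * q) := by ring
        _ ≤ 2 * σ * q := mul_le_of_le_one_left (by positivity) hr
    nlinarith [sq_nonneg (2 * κ * r * q)]
  linarith

variable [CompleteSpace E]

/-- A speed function on space with values in `[δ, M]`, Lipschitz constant `L`, and gradient with
Lipschitz constant `N`. -/
structure IsRegularSpeed (g : E → ℝ) (L N : ℝ≥0) (δ : ℝ) (M : ℝ≥0) : Prop where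
  differentiable : Differentiable ℝ g
  lipschitzWith : LipschitzWith L g
  lipschitzWith_gradient : LipschitzWith N (gradient g)
  le : ∀ x, δ ≤ g x
  le_max : ∀ x, g x ≤ M

variable {g : E → ℝ}

lemma isRegularSpeed_of_forall_norm_sub_le (hg : Differentiable ℝ g)
    (h : ∀ x y, |g x - g y| ≤ L * ‖x - y‖ ∧ ‖gradient g x - gradient g y‖ ≤ N * ‖x - y‖ ∧
      δ ≤ g x ∧ g x ≤ M) :
    IsRegularSpeed g L N δ M where
  differentiable := hg
  lipschitzWith := lipschitzWith_iff_norm_sub_le.2 fun x y => (h x y).1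
  lipschitzWith_gradient := lipschitzWith_iff_norm_sub_le.2 fun x y => (h x y).2.1
  le x := (h x x).2.2.1
  le_max x := (h x x).2.2.2

namespace IsRegularSpeed

lemma norm_gradient_le (hg : IsRegularSpeed g L N δ M) (x : E) : ‖gradient g x‖ ≤ L := by
  rw [gradient, LinearIsometryEquiv.norm_map]
  exact norm_fderiv_le_of_lipschitz ℝ hg.lipschitzWith

lemma abs_le (hg : IsRegularSpeed g L N δ M) (hδ : 0 ≤ δ) (x : E) : |g x| ≤ M :=
  (abs_of_nonneg (hδ.trans (hg.le x))).trans_le (hg.le_max x)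

lemma quadratic_lower_bound (hg : IsRegularSpeed g L N δ M) (x v : E) :
    g x + ⟪gradient g x, v⟫ - N * ‖v‖ ^ 2 ≤ g (x + v) := by
  have hderiv (θ : ℝ) :
      HasDerivAt (fun θ : ℝ => g (x + θ • v)) ⟪gradient g (x + θ • v), v⟫ θ := by
    have hline : HasDerivAt (fun θ : ℝ => x + θ • v) v θ := by
      simpa using ((hasDerivAt_id θ).smul_const v).const_add x
    exact ((hg.differentiable _).hasGradientAt.hasFDerivAt.comp_hasDerivAt θ hline).congr_deriv
      (by simp)
  obtain ⟨θ, hθ, hslope⟩ := exists_hasDerivAt_eq_slope (fun θ : ℝ => g (x + θ • v)) _ zero_lt_one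
    (continuous_iff_continuousAt.2 fun θ => (hderiv θ).continuousAt).continuousOn
    fun θ _ => hderiv θ
  simp only [one_smul, zero_smul, add_zero, sub_zero, div_one] at hslope
  have hgap : ⟪gradient g x - gradient g (x + θ • v), v⟫ ≤ N * ‖v‖ ^ 2 := by
    calc ⟪gradient g x - gradient g (x + θ • v), v⟫
        ≤ N * ‖x - (x + θ • v)‖ * ‖v‖ := (real_inner_le_norm _ _).trans
          (mul_le_mul_of_nonneg_right (hg.lipschitzWith_gradient.norm_sub_le _ _) (norm_nonneg v))
      _ = N * (θ * ‖v‖) * ‖v‖ := by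
        rw [sub_add_cancel_left, norm_neg, norm_smul_of_nonneg hθ.1.le]
      _ ≤ N * ‖v‖ * ‖v‖ := by
        gcongr
        exact mul_le_of_le_one_left (norm_nonneg v) hθ.2.le
      _ = N * ‖v‖ ^ 2 := by ring
  rw [inner_sub_left] at hgap
  linarith

lemma norm_add_smul_le (hg : IsRegularSpeed g L N δ M) {x d e : E} {r : ℝ} (hd : ‖d‖ ≤ r)
    (he : ‖e‖ ≤ 1) (hrδ : 2 * (L + 1) * r ≤ δ) (hrN : 4 * N * r ≤ 1) :
    ‖d + (g x - ⟪gradient g x, d⟫ - r + r * ⟪gradient g x, e⟫) • e‖ ≤ g (x - d + r • e) := by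
  set σ := g x - ⟪gradient g x, d⟫ - r + r * ⟪gradient g x, e⟫
  have hr : 0 ≤ r := (norm_nonneg d).trans hd
  have hd_inner : ⟪gradient g x, d⟫ ≤ L * r := (real_inner_le_norm _ _).trans
    (mul_le_mul (hg.norm_gradient_le x) hd (norm_nonneg d) L.2)
  have he_inner : -L ≤ ⟪gradient g x, e⟫ := by
    refine neg_le_of_abs_le ((abs_real_inner_le_norm _ _).trans ?_)
    simpa using mul_le_mul (hg.norm_gradient_le x) he (norm_nonneg e) L.2
  have hrσ : r ≤ σ := by
    linarith [hg.le x, mul_le_mul_of_nonneg_left he_inner hr]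
  have hlower := hg.quadratic_lower_bound x (r • e - d)
  rw [inner_sub_right, real_inner_smul_right] at hlower
  rw [show x - d + r • e = x + (r • e - d) by abel]
  linarith [norm_add_smul_add_mul_sq_le N.coe_nonneg hd he hrσ hrN]

end IsRegularSpeed

end RegularSpeed

section Trajectory

variable {E : Type*} [NormedAddCommGroup E] {c : E → ℝ → ℝ} {x y : ℝ → E} {a b d : ℝ}

/-- `x` is a curve of speed at most `c` on `[a, b]`, in an integrated form that encodes absolute
continuity together with the bound on the derivative. -/
def IsTrajectory (c : E → ℝ → ℝ) (x : ℝ → E) (a b : ℝ) : Prop :=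
  ∀ s₁ s₂ : ℝ, a ≤ s₁ → s₁ ≤ s₂ → s₂ ≤ b → ‖x s₂ - x s₁‖ ≤ ∫ s in s₁..s₂, c (x s) s

/-- The points reached at time `t` by the trajectories starting from `K₀` at time `0`. -/
def reachableSet (c : E → ℝ → ℝ) (K₀ : Set E) (t : ℝ) : Set E :=
  {z | ∃ x : ℝ → E, x 0 ∈ K₀ ∧ x t = z ∧ IsTrajectory c x 0 t}

lemma intervalIntegrable_comp_of_bounded [MeasurableSpace E] [BorelSpace E]
    (hc : Measurable (Function.uncurry c)) {M : ℝ} (hab : a ≤ b)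
    (hM : ∀ᵐ s ∂volume.restrict (Icc a b), ∀ z, |c z s| ≤ M)
    (hx : ContinuousOn x (Icc a b)) :
    IntervalIntegrable (fun s => c (x s) s) volume a b := by
  rw [intervalIntegrable_iff_integrableOn_Icc_of_le hab]
  exact (integrable_const M).mono'
    (hc.comp_aemeasurable
      ((hx.aemeasurable measurableSet_Icc).prodMk aemeasurable_id)).aestronglyMeasurable
    (hM.mono fun s hs => hs _)

namespace IsTrajectory

lemma mono (hx : IsTrajectory c x a b) {a' b' : ℝ} (ha : a ≤ a') (hb : b' ≤ b) :
    IsTrajectory c x a' b' :=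
  fun s₁ s₂ h₁ h₁₂ h₂ => hx s₁ s₂ (ha.trans h₁) h₁₂ (h₂.trans hb)

lemma congr (hx : IsTrajectory c x a b) (hxy : EqOn x y (Icc a b)) : IsTrajectory c y a b := by
  intro s₁ s₂ h₁ h₁₂ h₂
  rw [← hxy ⟨h₁, h₁₂.trans h₂⟩, ← hxy ⟨h₁.trans h₁₂, h₂⟩]
  refine (hx s₁ s₂ h₁ h₁₂ h₂).trans_eq (intervalIntegral.integral_congr fun s hs => ?_)
  rw [uIcc_of_le h₁₂] at hs
  simp only [hxy ⟨h₁.trans hs.1, hs.2.trans h₂⟩]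

lemma trans (hab : IsTrajectory c x a b) (hbd : IsTrajectory c x b d)
    (hint : IntervalIntegrable (fun s => c (x s) s) volume a d) : IsTrajectory c x a d := by
  intro s₁ s₂ h₁ h₁₂ h₂
  rcases le_total s₂ b with h₂b | hb₂
  · exact hab s₁ s₂ h₁ h₁₂ h₂b
  rcases le_total b s₁ with hb₁ | h₁b
  · exact hbd s₁ s₂ hb₁ h₁₂ h₂
  have had : a ≤ d := h₁.trans (h₁₂.trans h₂)
  have hint' {s t : ℝ} (hs : a ≤ s) (hst : s ≤ t) (ht : t ≤ d) :
      IntervalIntegrable (fun s => c (x s) s) volume s t :=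
    hint.mono_set (by rw [uIcc_of_le hst, uIcc_of_le had]; exact Icc_subset_Icc hs ht)
  calc ‖x s₂ - x s₁‖ ≤ ‖x b - x s₁‖ + ‖x s₂ - x b‖ := by
        simpa only [sub_add_sub_cancel'] using norm_add_le (x b - x s₁) (x s₂ - x b)
    _ ≤ (∫ s in s₁..b, c (x s) s) + ∫ s in b..s₂, c (x s) s :=
        add_le_add (hab s₁ b h₁ h₁b le_rfl) (hbd b s₂ le_rfl hb₂ h₂)
    _ = ∫ s in s₁..s₂, c (x s) s := intervalIntegral.integral_add_adjacent_intervals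
        (hint' h₁ h₁b (hb₂.trans h₂)) (hint' (h₁.trans h₁b) hb₂ h₂)

lemma lipschitzOnWith {M : ℝ≥0} (hx : IsTrajectory c x a b)
    (hM : ∀ᵐ s ∂volume.restrict (Icc a b), ∀ z, |c z s| ≤ M) : LipschitzOnWith M x (Icc a b) := by
  refine LipschitzOnWith.of_dist_le_mul fun s hs t ht => ?_
  wlog hts : t ≤ s generalizing s t
  · rw [dist_comm, dist_comm s]
    exact this t ht s hs (le_of_not_ge hts)
  rw [dist_eq_norm, Real.dist_eq]
  calc ‖x s - x t‖ ≤ ∫ τ in t..s, c (x τ) τ := hx t s ht.1 hts hs.2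
    _ ≤ ‖∫ τ in t..s, c (x τ) τ‖ := Real.le_norm_self _
    _ ≤ M * |s - t| := by
      refine intervalIntegral.norm_integral_le_of_norm_le_const_ae ?_
      filter_upwards [(ae_restrict_iff' measurableSet_Icc).1 hM] with τ hτ hmem
      rw [uIoc_of_le hts] at hmem
      exact hτ ⟨ht.1.trans hmem.1.le, hmem.2.trans hs.2⟩ _

lemma glue [MeasurableSpace E] [BorelSpace E] (hc : Measurable (Function.uncurry c)) {M : ℝ≥0}
    (hM : ∀ᵐ s ∂volume.restrict (Icc a d), ∀ z, |c z s| ≤ M) (hab : a ≤ b) (hbd : b ≤ d)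
    (hx : IsTrajectory c x a b) (hy : IsTrajectory c y b d) (hxy : x b = y b) :
    IsTrajectory c (fun s => if s ≤ b then x s else y s) a d := by
  set z := fun s => if s ≤ b then x s else y s
  have hzx : EqOn x z (Icc a b) := fun s hs => (if_pos hs.2).symm
  have hzy : EqOn y z (Icc b d) := fun s hs => by
    rcases hs.1.eq_or_lt with rfl | hlt
    · simp only [z, le_refl, if_true, hxy]
    · simp only [z, hlt.not_ge, if_false]
  have hMsub {s t : ℝ} (hs : a ≤ s) (ht : t ≤ d) :=
    ae_restrict_of_ae_restrict_of_subset (Icc_subset_Icc hs ht) hM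
  have hzab := hx.congr hzx
  have hzbd := hy.congr hzy
  have hint := (intervalIntegrable_comp_of_bounded hc hab (hMsub le_rfl hbd)
    (hzab.lipschitzOnWith (hMsub le_rfl hbd)).continuousOn).trans
    (intervalIntegrable_comp_of_bounded hc hbd (hMsub hab le_rfl)
      (hzbd.lipschitzOnWith (hMsub hab le_rfl)).continuousOn)
  exact hzab.trans hzbd hint

end IsTrajectory

lemma isTrajectory_of_ae_norm_hasDerivAt_le [NormedSpace ℝ E] [MeasurableSpace E] [BorelSpace E]
    (hc : Measurable (Function.uncurry c)) {M : ℝ} {x' : ℝ → E}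
    (hM : ∀ᵐ s ∂volume.restrict (Icc a b), ∀ z, |c z s| ≤ M)
    (hx : AbsolutelyContinuousOnInterval x a b)
    (hx' : ∀ᵐ s ∂volume.restrict (Icc a b), HasDerivAt x (x' s) s)
    (hle : ∀ᵐ s ∂volume.restrict (Icc a b), ‖x' s‖ ≤ c (x s) s) : IsTrajectory c x a b := by
  intro s₁ s₂ h₁ h₁₂ h₂
  have hab : a ≤ b := h₁.trans (h₁₂.trans h₂)
  have hsub : Icc s₁ s₂ ⊆ Icc a b := Icc_subset_Icc h₁ h₂
  have hcont : ContinuousOn x (Icc a b) := by simpa only [uIcc_of_le hab] using hx.continuousOn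
  exact norm_sub_le_integral_of_ae_hasDerivAt h₁₂
    (hx.mono (by rwa [uIcc_of_le h₁₂, uIcc_of_le hab]))
    (ae_restrict_of_ae_restrict_of_subset hsub hx')
    (intervalIntegrable_comp_of_bounded hc h₁₂ (ae_restrict_of_ae_restrict_of_subset hsub hM)
      (hcont.mono hsub))
    (ae_restrict_of_ae_restrict_of_subset hsub hle)

end Trajectory

section BoundaryCurve

open scoped RealInnerProductSpace

variable {E : Type*} [NormedAddCommGroup E] [InnerProductSpace ℝ E] {x : ℝ → E}
  {w p : ℝ → E × ℝ}

/-- The curve that traces, on the boundary of the moving ball with centre `x - d` and radius `r`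
for `w = (d, r)`, the point in the direction of the transported vector `p`. -/
noncomputable def boundaryCurve (x : ℝ → E) (w p : ℝ → E × ℝ) (s : ℝ) : E :=
  x s - (w s).1 + ((w s).2 * (p s).2⁻¹) • (p s).1

lemma hasDerivAt_boundaryCurve {v A : E} {C s : ℝ} (hx : HasDerivAt x v s)
    (hw : HasDerivAt w ((v, C) - boost A (w s) - w s) s) (hp : HasDerivAt p (-boost A (p s)) s)
    (hp₀ : (p s).2 ≠ 0) :
    HasDerivAt (boundaryCurve x w p)
      ((w s).1 + (C - ⟪A, (w s).1⟫ - (w s).2 + (w s).2 * ⟪A, (p s).2⁻¹ • (p s).1⟫) •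
        ((p s).2⁻¹ • (p s).1)) s := by
  refine ((hx.sub (hasDerivAt_fst hw)).add
    (((hasDerivAt_snd hw).mul ((hasDerivAt_snd hp).inv hp₀)).smul
      (hasDerivAt_fst hp))).congr_deriv ?_
  simp only [boost_apply, Prod.fst_sub, Prod.snd_sub, Prod.fst_neg, Prod.snd_neg,
    real_inner_smul_right, Pi.mul_apply, Pi.inv_apply]
  match_scalars <;> field_simp <;> ring

lemma absolutelyContinuousOnInterval_boundaryCurve {K₁ K₂ K₃ : ℝ≥0} {a b ε : ℝ}
    (hab : a ≤ b) (hx : LipschitzOnWith K₁ x (Icc a b)) (hw : LipschitzWith K₂ w)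
    (hp : LipschitzWith K₃ p) (hε : 0 < ε) (hpε : ∀ s ∈ Icc a b, ε ≤ (p s).2) :
    AbsolutelyContinuousOnInterval (boundaryCurve x w p) a b := by
  rw [← uIcc_of_le hab] at hx hpε
  have hd : AbsolutelyContinuousOnInterval (fun s => (w s).1) a b :=
    (LipschitzWith.prod_fst.comp hw).lipschitzOnWith.absolutelyContinuousOnInterval
  have hr : AbsolutelyContinuousOnInterval (fun s => (w s).2) a b :=
    (LipschitzWith.prod_snd.comp hw).lipschitzOnWith.absolutelyContinuousOnInterval
  have he : AbsolutelyContinuousOnInterval (fun s => (p s).1) a b :=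
    (LipschitzWith.prod_fst.comp hp).lipschitzOnWith.absolutelyContinuousOnInterval
  have hm : AbsolutelyContinuousOnInterval (fun s => (p s).2) a b :=
    (LipschitzWith.prod_snd.comp hp).lipschitzOnWith.absolutelyContinuousOnInterval
  have hscale : AbsolutelyContinuousOnInterval (fun s => (w s).2 * (p s).2⁻¹) a b :=
    hr.mul (absolutelyContinuousOnInterval_inv hε hm hpε)
  have hradial : AbsolutelyContinuousOnInterval
      (fun s => ((w s).2 * (p s).2⁻¹) • (p s).1) a b := hscale.smul he
  have hcentre : AbsolutelyContinuousOnInterval (fun s => x s - (w s).1) a b :=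
    hx.absolutelyContinuousOnInterval.sub hd
  exact hcentre.add hradial

end BoundaryCurve

section InteriorBall

open scoped RealInnerProductSpace

variable {E : Type*} [NormedAddCommGroup E] [InnerProductSpace ℝ E] [FiniteDimensional ℝ E]
  [MeasurableSpace E] [BorelSpace E] {c : E → ℝ → ℝ} {x : ℝ → E} {a b δ : ℝ} {L N M : ℝ≥0}

lemma aestronglyMeasurable_gradient_comp {μ : Measure ℝ} (hc : Measurable (Function.uncurry c))
    (hd : ∀ᵐ s ∂μ, Differentiable ℝ fun z => c z s) (hx : AEMeasurable x μ) :
    AEStronglyMeasurable (fun s => gradient (fun z => c z s) (x s)) μ := by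
  have hinner (v : E) : AEMeasurable (fun s => ⟪v, gradient (fun z => c z s) (x s)⟫) μ := by
    refine aemeasurable_of_tendsto_metrizable_ae atTop
      (f := fun (n : ℕ) s => (n : ℝ) • (c (x s + (n : ℝ)⁻¹ • v) s - c (x s) s)) (fun n => ?_) ?_
    · exact ((hc.comp_aemeasurable ((hx.add_const _).prodMk aemeasurable_id)).sub
        (hc.comp_aemeasurable (hx.prodMk aemeasurable_id))).const_smul (n : ℝ)
    · filter_upwards [hd] with s hs
      have hlim := ((hs (x s)).hasGradientAt.hasFDerivAt.lim_real v).comp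
        tendsto_natCast_atTop_atTop
      rw [real_inner_comm]
      simpa [Function.comp_def] using hlim
  have hsum (s : ℝ) : ∑ i, ⟪stdOrthonormalBasis ℝ E i, gradient (fun z => c z s) (x s)⟫ •
      stdOrthonormalBasis ℝ E i = gradient (fun z => c z s) (x s) :=
    (stdOrthonormalBasis ℝ E).sum_repr' _
  exact (Finset.aestronglyMeasurable_fun_sum _ fun i _ =>
    (hinner (stdOrthonormalBasis ℝ E i)).aestronglyMeasurable.smul_const _).congr
      (Eventually.of_forall hsum)

lemma IsTrajectory.ae_hasDerivAt (hx : IsTrajectory c x a b) (hab : a ≤ b)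
    (hc : Measurable (Function.uncurry c))
    (hM : ∀ᵐ s ∂volume.restrict (Icc a b), ∀ z, |c z s| ≤ M) :
    ∀ᵐ s ∂volume.restrict (Icc a b), HasDerivAt x (deriv x s) s ∧ ‖deriv x s‖ ≤ c (x s) s :=
  have hlip := hx.lipschitzOnWith hM
  ae_hasDerivAt_deriv_of_norm_sub_le_integral hab hlip
    (intervalIntegrable_comp_of_bounded hc hab hM hlip.continuousOn) hx

lemma IsTrajectory.isSpeedJet (hx : IsTrajectory c x a b) (hab : a ≤ b) (hδ : 0 ≤ δ)
    (hc : Measurable (Function.uncurry c))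
    (hreg : ∀ᵐ s ∂volume.restrict (Icc a b), IsRegularSpeed (fun z => c z s) L N δ M) :
    IsSpeedJet (fun s => (deriv x s, c (x s) s)) (fun s => gradient (fun z => c z s) (x s))
      a b δ L M where
  aestronglyMeasurable := by
    have hM := hreg.mono fun s hs => hs.abs_le hδ
    exact (aestronglyMeasurable_deriv x _).prodMk
      (intervalIntegrable_iff_integrableOn_Icc_of_le hab |>.1 <|
        intervalIntegrable_comp_of_bounded hc hab hM
          (hx.lipschitzOnWith hM).continuousOn).aestronglyMeasurable
  aestronglyMeasurable_gradient :=
    aestronglyMeasurable_gradient_comp hc (hreg.mono fun s hs => hs.differentiable)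
      ((hx.lipschitzOnWith (hreg.mono fun s hs => hs.abs_le hδ)).continuousOn.aemeasurable
        measurableSet_Icc)
  norm_gradient_le := hreg.mono fun s hs => hs.norm_gradient_le (x s)
  norm_velocity_le := (hx.ae_hasDerivAt hab hc
    (hreg.mono fun s hs => hs.abs_le hδ)).mono fun s hs => hs.2
  le_speed := hreg.mono fun s hs => hs.le (x s)
  speed_le := hreg.mono fun s hs => hs.le_max (x s)

lemma isTrajectory_boundaryCurve (hx : IsTrajectory c x a b) (hab : a ≤ b) (hδ : 0 ≤ δ)
    (hc : Measurable (Function.uncurry c))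
    (hreg : ∀ᵐ s ∂volume.restrict (Icc a b), IsRegularSpeed (fun z => c z s) L N δ M)
    {w p : ℝ → E × ℝ}
    (hw : IsMovingBall (fun s => (deriv x s, c (x s) s)) (fun s => gradient (fun z => c z s) (x s))
      a b w)
    (hp : IsBoostTransported (fun s => gradient (fun z => c z s) (x s)) a b p)
    (hpcone : ∀ s ∈ Icc a b, 1 / 2 ≤ (p s).2 ∧ ‖(p s).1‖ ≤ (p s).2)
    (hwcone : ∀ s ∈ Icc a b, ‖(w s).1‖ ≤ (w s).2)
    (hwδ : ∀ s ∈ Icc a b, 2 * (L + 1) * (w s).2 ≤ δ) (hwN : ∀ s ∈ Icc a b, 4 * N * (w s).2 ≤ 1) :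
    IsTrajectory c (boundaryCurve x w p) a b := by
  have hM := hreg.mono fun s hs => hs.abs_le hδ
  obtain ⟨K, hK⟩ := hw.lipschitz
  obtain ⟨K', hK'⟩ := hp.lipschitz
  refine isTrajectory_of_ae_norm_hasDerivAt_le hc hM
    (absolutelyContinuousOnInterval_boundaryCurve hab (hx.lipschitzOnWith hM) hK hK'
      (by norm_num : (0 : ℝ) < 1 / 2) fun s hs => (hpcone s hs).1)
    (x' := fun s => (w s).1 + (c (x s) s - ⟪gradient (fun z => c z s) (x s), (w s).1⟫ - (w s).2 +
      (w s).2 * ⟪gradient (fun z => c z s) (x s), (p s).2⁻¹ • (p s).1⟫) • ((p s).2⁻¹ • (p s).1))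
    ?_ ?_
  · filter_upwards [hx.ae_hasDerivAt hab hc hM, hw.hasDerivAt, hp.hasDerivAt,
      ae_restrict_mem measurableSet_Icc] with s hxs hws hps hmem
    exact hasDerivAt_boundaryCurve hxs.1 hws hps (by linarith [(hpcone s hmem).1])
  · filter_upwards [hreg, ae_restrict_mem measurableSet_Icc] with s hregs hmem
    have hpos : 0 < (p s).2 := by linarith [(hpcone s hmem).1]
    have hunit : ‖(p s).2⁻¹ • (p s).1‖ ≤ 1 := by
      rw [norm_smul, norm_inv, Real.norm_of_nonneg hpos.le, inv_mul_le_one₀ hpos]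
      exact (hpcone s hmem).2
    rw [boundaryCurve, mul_smul]
    exact hregs.norm_add_smul_le (hwcone s hmem) hunit (hwδ s hmem) (hwN s hmem)

end InteriorBall

section InteriorBallProperty

/-- The interior ball property of radius `ρ`: every point of `S` lies on the boundary of a closed
ball of radius `ρ` contained in `S`. -/
def HasInteriorBallProperty {E : Type*} [NormedAddCommGroup E] [NormedSpace ℝ E] (S : Set E)
    (ρ : ℝ) : Prop :=
  ∀ z ∈ S, ∃ p : E, p ≠ 0 ∧ closedBall (z - (ρ / ‖p‖) • p) ρ ⊆ S

lemma hasInteriorBallProperty_closedBall {E : Type*} [NormedAddCommGroup E] [NormedSpace ℝ E]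
    [Nontrivial E] (o : E) {ρ r : ℝ} (hρ : 0 ≤ ρ) (hρr : 2 * ρ ≤ r) :
    HasInteriorBallProperty (closedBall o r) ρ := by
  intro z hz
  suffices h : ∃ p : E, p ≠ 0 ∧ ‖z - (ρ / ‖p‖) • p - o‖ ≤ r - ρ by
    obtain ⟨p, hp, hpr⟩ := h
    exact ⟨p, hp, closedBall_subset_closedBall' (by rw [dist_eq_norm]; linarith)⟩
  rw [mem_closedBall, dist_eq_norm] at hz
  by_cases hzo : z = o
  · obtain ⟨p, hp⟩ := exists_ne (0 : E)
    refine ⟨p, hp, ?_⟩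
    rw [hzo, sub_sub_cancel_left, norm_neg, norm_smul, norm_div, norm_norm,
      div_mul_cancel₀ _ (norm_ne_zero_iff.2 hp), Real.norm_of_nonneg hρ]
    linarith
  · have hpos : 0 < ‖z - o‖ := norm_sub_pos_iff.2 hzo
    refine ⟨z - o, sub_ne_zero.2 hzo, ?_⟩
    calc ‖z - (ρ / ‖z - o‖) • (z - o) - o‖ = ‖(1 - ρ / ‖z - o‖) • (z - o)‖ := by
          rw [sub_smul, one_smul, sub_right_comm]
      _ = |‖z - o‖ - ρ| := by
          rw [norm_smul, Real.norm_eq_abs, ← abs_of_pos hpos, ← abs_mul, abs_of_pos hpos, sub_mul,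
            one_mul, div_mul_cancel₀ _ hpos.ne']
      _ ≤ r - ρ := abs_le.2 ⟨by linarith, by linarith⟩

end InteriorBallProperty

section ReachableBall

variable {E : Type*} [NormedAddCommGroup E] [InnerProductSpace ℝ E] [FiniteDimensional ℝ E]
  [MeasurableSpace E] [BorelSpace E] {c : E → ℝ → ℝ} {x : ℝ → E} {a b δ : ℝ} {L N M : ℝ≥0}

theorem IsTrajectory.exists_closedBall (hx : IsTrajectory c x a b) (hab : a < b) (hδ : 0 < δ)
    (hc : Measurable (Function.uncurry c))
    (hreg : ∀ᵐ s ∂volume.restrict (Icc a b), IsRegularSpeed (fun z => c z s) L N δ M)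
    (hL : 4 * (L + 1) * (b - a) ≤ 1) (hLM : 4 * M * (L + 1) * (b - a) ≤ δ)
    (hNM : 8 * N * M * (b - a) ≤ 1) :
    ∃ o r, x b ∈ closedBall o r ∧ δ / 2 * (b - a) ≤ r ∧
      ∀ y ∈ closedBall o r, ∃ Y, Y a = x a ∧ Y b = y ∧ IsTrajectory c Y a b := by
  have hjet := hx.isSpeedJet hab.le hδ.le hc hreg
  have hL' : 4 * L * (b - a) ≤ 1 := by linarith
  obtain ⟨w, hw, hwM⟩ := hjet.exists_isMovingBall hab.le (by linarith)
  have hwcone : ∀ s ∈ Icc a b, ‖(w s).1‖ ≤ (w s).2 :=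
    fun s => hjet.norm_displacement_le_radius hL' hw
  have hrM : ∀ s ∈ Icc a b, (w s).2 ≤ 2 * M * (b - a) :=
    fun s hs => (Real.le_norm_self _).trans ((norm_snd_le _).trans (hwM s hs))
  have hr : δ / 2 * (b - a) ≤ (w b).2 := hjet.le_radius hw hwM hLM hab.le
  have hr₀ : 0 < (w b).2 := hr.trans_lt' (mul_pos (half_pos hδ) (sub_pos.2 hab))
  have hb : b ∈ Icc a b := right_mem_Icc.2 hab.le
  refine ⟨x b - (w b).1, (w b).2, by simpa [dist_eq_norm] using hwcone b hb, hr, fun y hy => ?_⟩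
  have hdir : ‖(w b).2⁻¹ • (y - (x b - (w b).1))‖ ≤ 1 := by
    rw [norm_smul, norm_inv, Real.norm_of_nonneg hr₀.le, inv_mul_le_one₀ hr₀, ← dist_eq_norm]
    exact hy
  obtain ⟨p, hp, hpb, hpcone⟩ := exists_isBoostTransported hjet.aestronglyMeasurable_gradient
    hjet.norm_gradient_le hL' hb hdir
  refine ⟨boundaryCurve x w p, by simp [boundaryCurve, hw.eq_zero], ?_,
    isTrajectory_boundaryCurve hx hab.le hδ.le hc hreg hw hp hpcone hwcone (fun s hs => ?_)
      fun s hs => ?_⟩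
  · rw [boundaryCurve, hpb, inv_one, mul_one, smul_inv_smul₀ hr₀.ne', add_sub_cancel]
  · linarith [mul_le_mul_of_nonneg_left (hrM s hs) (by positivity : (0 : ℝ) ≤ 2 * (L + 1))]
  · linarith [mul_le_mul_of_nonneg_left (hrM s hs) (by positivity : (0 : ℝ) ≤ 4 * N)]

theorem exists_closedBall_subset_reachableSet {K₀ : Set E} {t t₀ : ℝ} (ht₀ : 0 ≤ t₀)
    (ht₀t : t₀ < t) (hδ : 0 < δ) (hc : Measurable (Function.uncurry c))
    (hreg : ∀ᵐ s ∂volume.restrict (Icc 0 t), IsRegularSpeed (fun z => c z s) L N δ M)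
    (hL : 4 * (L + 1) * (t - t₀) ≤ 1) (hLM : 4 * M * (L + 1) * (t - t₀) ≤ δ)
    (hNM : 8 * N * M * (t - t₀) ≤ 1) {z : E} (hz : z ∈ reachableSet c K₀ t) :
    ∃ o r, z ∈ closedBall o r ∧ δ / 2 * (t - t₀) ≤ r ∧ closedBall o r ⊆ reachableSet c K₀ t := by
  obtain ⟨x, hx₀, rfl, hx⟩ := hz
  obtain ⟨o, r, hxt, hr, hball⟩ := (hx.mono ht₀ le_rfl).exists_closedBall ht₀t hδ hc
    (ae_restrict_of_ae_restrict_of_subset (Icc_subset_Icc_left ht₀) hreg) hL hLM hNM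
  refine ⟨o, r, hxt, hr, fun y hy => ?_⟩
  obtain ⟨Y, hYt₀, hYt, hY⟩ := hball y hy
  exact ⟨fun s => if s ≤ t₀ then x s else Y s, by simpa only [if_pos ht₀] using hx₀,
    by simpa only [if_neg ht₀t.not_ge] using hYt,
    (hx.mono le_rfl ht₀t.le).glue hc (hreg.mono fun s hs => hs.abs_le hδ.le) ht₀ ht₀t.le hY
      hYt₀.symm⟩

end ReachableBall

universe u

theorem stmt_14_general (T δ : ℝ) (L N M : ℝ≥0) (hδ : 0 < δ) :
    ∃ γ : ℝ, 0 < γ ∧ ∀ (E : Type u) [NormedAddCommGroup E] [InnerProductSpace ℝ E]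
      [FiniteDimensional ℝ E] [Nontrivial E] [MeasurableSpace E] [BorelSpace E] (c : E → ℝ → ℝ),
      Measurable (Function.uncurry c) →
      (∀ᵐ s ∂volume.restrict (Icc 0 T), IsRegularSpeed (fun z => c z s) L N δ M) →
      ∀ (K₀ : Set E) (t : ℝ), 0 < t → t ≤ T →
        HasInteriorBallProperty (reachableSet c K₀ t) (γ * t) := by
  have hsmall (C : ℝ) {ε : ℝ} (hε : 0 < ε) : ∀ᶠ θ in 𝓝[>] (0 : ℝ), C * (θ * T) < ε :=
    nhdsWithin_le_nhds <|
      ((by fun_prop : Continuous fun θ => C * (θ * T)).tendsto 0).eventually_lt_const (by simpa)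
  obtain ⟨θ, ⟨⟨hL, hLM⟩, hNM⟩, hθ₀, hθ₁⟩ := (((hsmall (4 * (L + 1)) one_pos).and
    (hsmall (4 * M * (L + 1)) hδ)).and (hsmall (8 * N * M) one_pos)).and
      (Ioo_mem_nhdsGT one_pos) |>.exists
  refine ⟨δ / 4 * θ, by positivity, fun E _ _ _ _ _ _ c hc hreg K₀ t ht htT z hz => ?_⟩
  have hshort {C ε : ℝ} (hC : 0 ≤ C) (h : C * (θ * T) < ε) : C * (t - (1 - θ) * t) ≤ ε := by
    rw [show t - (1 - θ) * t = θ * t by ring]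
    exact h.le.trans' (by gcongr)
  obtain ⟨o, r, hzo, hr, hsub⟩ := exists_closedBall_subset_reachableSet
    (mul_nonneg (sub_nonneg.2 hθ₁.le) ht.le) (by nlinarith : (1 - θ) * t < t) hδ hc
    (ae_restrict_of_ae_restrict_of_subset (Icc_subset_Icc_right htT) hreg)
    (hshort (by positivity) hL) (hshort (by positivity) hLM) (hshort (by positivity) hNM) hz
  obtain ⟨p, hp, hball⟩ := hasInteriorBallProperty_closedBall o
    (ρ := δ / 4 * θ * t) (by positivity) (by linarith) z hzo
  exact ⟨p, hp, hball.trans hsub⟩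

end

/-- Interior ball regularization of reachable sets. Given constants
`T > 0`, `L₁, N₁ ≥ 0`, `0 < δ ≤ M₁`, there exists `γ > 0` depending only on these
constants such that: for any dimension `N ≥ 1`, any Borel measurable velocity
`c : ℝ^N × [0,T] → ℝ` which for a.e. `t` is `C¹` in `x` with
`|c(x,t) − c(y,t)| ≤ L₁|x−y|`, `|D_x c(x,t) − D_x c(y,t)| ≤ N₁|x−y|` and
`δ ≤ c ≤ M₁`, and any nonempty closed initial set `K₀ ⊆ ℝ^N`, the reachable set
`ℛ(t)` (endpoints at time `t` of absolutely continuous trajectories starting from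
`K₀` with speed at most `c`, encoded by the equivalent metric condition
`‖x(s₂) − x(s₁)‖ ≤ ∫_{s₁}^{s₂} c(x(s), s) ds`) has, for every `t ∈ (0,T]`, the
interior ball property of radius `γ t`: every `z ∈ ℛ(t)` admits `p ≠ 0` with
`B̄(z − γt p/|p|, γt) ⊆ ℛ(t)`. -/
theorem stmt_14 (T L₁ N₁ M₁ δ : ℝ)
    (hT : 0 < T) (hL₁ : 0 ≤ L₁) (hN₁ : 0 ≤ N₁) (hδ : 0 < δ) (hδM : δ ≤ M₁) :
    ∃ γ : ℝ, 0 < γ ∧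
      ∀ (N : ℕ), 1 ≤ N →
      ∀ (c : EuclideanSpace ℝ (Fin N) → ℝ → ℝ),
      Measurable (Function.uncurry c) →
      (∀ᵐ t ∂(volume.restrict (Set.Icc 0 T)),
        ContDiff ℝ 1 (fun x => c x t) ∧
        ∀ x y : EuclideanSpace ℝ (Fin N),
          |c x t - c y t| ≤ L₁ * ‖x - y‖ ∧
          ‖gradient (fun z => c z t) x - gradient (fun z => c z t) y‖ ≤ N₁ * ‖x - y‖ ∧
          δ ≤ c x t ∧ c x t ≤ M₁) →
      ∀ (K₀ : Set (EuclideanSpace ℝ (Fin N))), K₀.Nonempty → IsClosed K₀ →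
      ∀ (R : ℝ → Set (EuclideanSpace ℝ (Fin N))),
      (∀ t : ℝ, R t = {z : EuclideanSpace ℝ (Fin N) |
        ∃ x : ℝ → EuclideanSpace ℝ (Fin N), x 0 ∈ K₀ ∧ x t = z ∧
          ∀ s₁ s₂ : ℝ, 0 ≤ s₁ → s₁ ≤ s₂ → s₂ ≤ t →
            ‖x s₂ - x s₁‖ ≤ ∫ s in s₁..s₂, c (x s) s}) →
      ∀ t : ℝ, 0 < t → t ≤ T →
        ∀ z ∈ R t, ∃ p : EuclideanSpace ℝ (Fin N), p ≠ 0 ∧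
          Metric.closedBall (z - ((γ * t) / ‖p‖) • p) (γ * t) ⊆ R t := by
  lift L₁ to NNReal using hL₁
  lift N₁ to NNReal using hN₁
  lift M₁ to NNReal using hδ.le.trans hδM
  obtain ⟨γ, hγ, hball⟩ := stmt_14_general T δ L₁ N₁ M₁ hδ
  refine ⟨γ, hγ, fun N hN c hc hreg K₀ _ _ R hR t ht htT z hz => ?_⟩
  have : NeZero N := ⟨by lia⟩
  rw [hR t] at hz ⊢
  exact hball _ c hc (hreg.mono fun s hs => isRegularSpeed_of_forall_norm_sub_le
    (hs.1.differentiable one_ne_zero) hs.2) K₀ t ht htT z hz
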